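/- arXiv:2504.06506 — 2 statements merged into one kernel-verified Lean document; each statement's English description precedes it below -/
import Mathlib

section
/- Let H₁, H₂, H₃ be complex Hilbert spaces, and let T₁ : dom(T₁) ⊆ H₁ → H₂ and T₂ : dom(T₂) ⊆ H₂ → H₃ be left semi-Fredholm operators (in particular densely defined and closed), and assume that T₂T₁ is densely defined in H₁. Then T₂T₁ is closed and left semi-Fredholm (it has closed range and finite-dimensional kernel), and the index formula holds in cardinal arithmetic: dim ker(T₂T₁) + dim ker(T₁*) + dim ker(T₂*) = dim ker(T₁) + dim ker(T₂) + dim ker((T₂T₁)*), where dim denotes the Hilbert-space dimension as a cardinal. -/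
open scoped InnerProductSpace
open Cardinal

noncomputable section

variable {E F G H : Type*}
  [NormedAddCommGroup E] [InnerProductSpace ℂ E] [CompleteSpace E]
  [NormedAddCommGroup F] [InnerProductSpace ℂ F] [CompleteSpace F]
  [NormedAddCommGroup G] [InnerProductSpace ℂ G] [CompleteSpace G]
  [NormedAddCommGroup H] [InnerProductSpace ℂ H] [CompleteSpace H]

/-- The product (composition) `T₂T₁` of two partially defined linear operators, with domain
`dom(T₂T₁) = {f ∈ dom T₁ | T₁ f ∈ dom T₂}` and value `(T₂T₁) f = T₂ (T₁ f)`. -/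
def pcomp {E F G : Type*}
    [NormedAddCommGroup E] [InnerProductSpace ℂ E]
    [NormedAddCommGroup F] [InnerProductSpace ℂ F]
    [NormedAddCommGroup G] [InnerProductSpace ℂ G]
    (T₂ : F →ₗ.[ℂ] G) (T₁ : E →ₗ.[ℂ] F) : E →ₗ.[ℂ] G where
  domain := (T₂.domain.comap T₁.toFun).map T₁.domain.subtype
  toFun := T₂.toFun ∘ₗ
    (T₁.toFun.restrict (p := T₂.domain.comap T₁.toFun) (q := T₂.domain) fun _ hx => hx) ∘ₗ
    (Submodule.equivMapOfInjective T₁.domain.subtype (Submodule.injective_subtype _)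
      (T₂.domain.comap T₁.toFun)).symm.toLinearMap

/-- The identity as a partially defined operator (domain all of `X`). -/
def pid (X : Type*) [NormedAddCommGroup X] [InnerProductSpace ℂ X] : X →ₗ.[ℂ] X :=
  ⟨⊤, (⊤ : Submodule ℂ X).subtype⟩

/-- Powers of a partially defined operator: `S⁰ = I`, `S¹ = S`, and recursively
`dom(S^m) = {f ∈ dom(S^{m-1}) | S^{m-1} f ∈ dom S}`, `S^m f = S (S^{m-1} f)`. -/
def pmapPow {X : Type*} [NormedAddCommGroup X] [InnerProductSpace ℂ X]
    (S : X →ₗ.[ℂ] X) : ℕ → X →ₗ.[ℂ] X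
  | 0 => pid X
  | 1 => S
  | (n + 2) => pcomp S (pmapPow S (n + 1))

/-- The kernel of `A - μ·I` as a submodule of the domain of `A`. -/
def kerAt {X : Type*} [NormedAddCommGroup X] [InnerProductSpace ℂ X]
    (A : X →ₗ.[ℂ] X) (μ : ℂ) : Submodule ℂ A.domain :=
  LinearMap.ker (A.toFun - μ • A.domain.subtype)

/-- Deficiency index `n₊(S) = dim ker(S* - i·I)`, a Hilbert-space dimension as a cardinal. -/
def nPlus (S : H →ₗ.[ℂ] H) : Cardinal := Module.rank ℂ (kerAt S.adjoint Complex.I)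

/-- Deficiency index `n₋(S) = dim ker(S* + i·I)`, a Hilbert-space dimension as a cardinal. -/
def nMinus (S : H →ₗ.[ℂ] H) : Cardinal := Module.rank ℂ (kerAt S.adjoint (-Complex.I))

/-- The symmetry condition `⟪Sf, g⟫ = ⟪f, Sg⟫` for all `f, g` in the domain of `S`. -/
def IsSymmP {X : Type*} [NormedAddCommGroup X] [InnerProductSpace ℂ X]
    (S : X →ₗ.[ℂ] X) : Prop :=
  ∀ f g : S.domain, ⟪S f, (g : X)⟫_ℂ = ⟪(f : X), S g⟫_ℂ

/-- The defect number of `T` at `0`: `def(T,0) = dim ker(T*)`, as a cardinal. -/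
def defect0 (T : E →ₗ.[ℂ] F) : Cardinal := Module.rank ℂ (LinearMap.ker T.adjoint.toFun)

/-- `0` belongs to the field of regularity of `T`: there is `c > 0` with
`‖T f‖ ≥ c ‖f‖` for all `f ∈ dom T`. -/
def ZeroRegular {X Y : Type*} [NormedAddCommGroup X] [InnerProductSpace ℂ X]
    [NormedAddCommGroup Y] [InnerProductSpace ℂ Y] (T : X →ₗ.[ℂ] Y) : Prop :=
  ∃ c : ℝ, 0 < c ∧ ∀ f : T.domain, c * ‖(f : X)‖ ≤ ‖T f‖

/-- `T` is Fredholm: densely defined, closed, with closed range, and finite-dimensional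
kernel and cokernel (= kernel of the adjoint). -/
def IsFredholmP (T : E →ₗ.[ℂ] F) : Prop :=
  Dense (T.domain : Set E) ∧ T.IsClosed ∧
    IsClosed ((LinearMap.range T.toFun : Submodule ℂ F) : Set F) ∧
    Module.rank ℂ (LinearMap.ker T.toFun) < ℵ₀ ∧
    Module.rank ℂ (LinearMap.ker T.adjoint.toFun) < ℵ₀

/-- `T` is left semi-Fredholm: densely defined, closed, with closed range and
finite-dimensional kernel. -/
def IsLeftSemiFredholmP (T : E →ₗ.[ℂ] F) : Prop :=
  Dense (T.domain : Set E) ∧ T.IsClosed ∧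
    IsClosed ((LinearMap.range T.toFun : Submodule ℂ F) : Set F) ∧
    Module.rank ℂ (LinearMap.ker T.toFun) < ℵ₀

/-- The (semi-)Fredholm index `ind(T) = dim ker T - dim ker T*` (as an integer,
via `finrank`). -/
def indP (T : E →ₗ.[ℂ] F) : ℤ :=
  (Module.finrank ℂ (LinearMap.ker T.toFun) : ℤ) -
    (Module.finrank ℂ (LinearMap.ker T.adjoint.toFun) : ℤ)

universe u v w

/-! `T₂T₁` is the composition of `s : dom(T₂T₁) → dom T₂`, the restriction of `T₁`, with
`T₂ : dom T₂ → G`. The kernel of `s` is that of `T₁`, and its range is `R ∩ dom T₂` with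
`R = ran T₁`. Algebraically, the exact sequence
`0 → ker s → ker(T₂ s) → ker T₂ → coker s → coker(T₂ s) → coker T₂ → 0`
gives the index formula with cokernels, and closedness of the ranges turns cokernels into kernels
of adjoints. The only analytic point is that `R ∩ dom T₂` has the same codimension in `dom T₂` as
`R` has in `F`. Since `dom T₂` is the image of a bounded operator on a Hilbert space, the graph of
`T₂`, its projection to `Rᗮ` is a dense operator range, and a dense operator range has the same
algebraic dimension as the whole space: if a bounded operator from an infinite-dimensional Hilbert
space `X` has dense range in `Y`, then comparing orthonormal bases embeds `Y` isometrically in `X`.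

The graph and the range of `T₂T₁` are images of closed subspaces under bounded operators with
closed range and finite-dimensional kernel, hence closed. -/

section LinearAlgebra

variable {K : Type*} [DivisionRing K]

theorem lift_rank_ker_inf_add_lift_rank_map {M : Type u} {N : Type v}
    [AddCommGroup M] [Module K M] [AddCommGroup N] [Module K N]
    (f : M →ₗ[K] N) (p : Submodule K M) :
    lift.{v} (Module.rank K ↥(f.ker ⊓ p)) + lift.{u} (Module.rank K (p.map f)) =
      lift.{v} (Module.rank K p) := by
  have hker : (f ∘ₗ p.subtype).ker = (f.ker ⊓ p).comap p.subtype := by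
    rw [LinearMap.ker_comp, Submodule.comap_inf, Submodule.comap_subtype_self, inf_top_eq]
  have hrange : (f ∘ₗ p.subtype).range = p.map f := by
    rw [LinearMap.range_comp, Submodule.range_subtype]
  rw [← LinearMap.lift_rank_range_add_rank_ker (f ∘ₗ p.subtype), hrange, hker,
    (Submodule.comapSubtypeEquivOfLe (inf_le_right : f.ker ⊓ p ≤ p)).rank_eq, add_comm]

theorem rank_quotient_eq_rank_map_mkQ_add {M : Type*} [AddCommGroup M] [Module K M]
    (S T : Submodule K M) :
    Module.rank K (M ⧸ S) = Module.rank K (T.map S.mkQ) + Module.rank K (M ⧸ S ⊔ T) := by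
  rw [← (T.map S.mkQ).rank_quotient_add_rank,
    (Submodule.quotientQuotientEquivQuotientSup S T).rank_eq, add_comm]

theorem lift_rank_quotient_map {D : Type u} {G : Type v}
    [AddCommGroup D] [Module K D] [AddCommGroup G] [Module K G]
    (t : D →ₗ[K] G) (R : Submodule K D) :
    lift.{u} (Module.rank K (G ⧸ R.map t)) =
      lift.{v} (Module.rank K (D ⧸ R ⊔ t.ker)) + lift.{u} (Module.rank K (G ⧸ t.range)) := by
  have hker : ((R.map t).mkQ ∘ₗ t).ker = R ⊔ t.ker := by
    rw [LinearMap.ker_comp, Submodule.ker_mkQ, Submodule.comap_map_eq]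
  have hrange : ((R.map t).mkQ ∘ₗ t).range = t.range.map (R.map t).mkQ :=
    LinearMap.range_comp _ _
  have himage : lift.{v} (Module.rank K (D ⧸ R ⊔ t.ker)) =
      lift.{u} (Module.rank K (t.range.map (R.map t).mkQ)) := by
    rw [← hker, ← hrange]
    exact ((R.map t).mkQ ∘ₗ t).quotKerEquivRange.lift_rank_eq
  rw [rank_quotient_eq_rank_map_mkQ_add (R.map t) t.range, sup_eq_right.mpr LinearMap.map_le_range,
    lift_add, himage]

theorem lift_rank_ker_comp_add_quotient_ranges {C : Type u} {D : Type v} {G : Type w}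
    [AddCommGroup C] [Module K C] [AddCommGroup D] [Module K D] [AddCommGroup G] [Module K G]
    (s : C →ₗ[K] D) (t : D →ₗ[K] G) :
    lift.{max v w} (Module.rank K (t ∘ₗ s).ker) + lift.{max u w} (Module.rank K (D ⧸ s.range)) +
        lift.{max u v} (Module.rank K (G ⧸ t.range)) =
      lift.{max v w} (Module.rank K s.ker) + lift.{max u w} (Module.rank K t.ker) +
        lift.{max u v} (Module.rank K (G ⧸ (t ∘ₗ s).range)) := by
  have ker_comp := congrArg lift.{w} (lift_rank_ker_inf_add_lift_rank_map s (t ∘ₗ s).ker)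
  have ker_t := congrArg lift.{max u w} (lift_rank_ker_inf_add_lift_rank_map s.range.mkQ t.ker)
  have coker_s := congrArg lift.{max u w} (rank_quotient_eq_rank_map_mkQ_add s.range t.ker)
  have coker_comp := congrArg lift.{u} (lift_rank_quotient_map t s.range)
  rw [inf_eq_left.mpr (LinearMap.ker_le_ker_comp s t), LinearMap.ker_comp,
    Submodule.map_comap_eq, ← LinearMap.ker_comp] at ker_comp
  rw [Submodule.ker_mkQ] at ker_t
  rw [← LinearMap.range_comp] at coker_comp
  simp only [lift_add, lift_lift, lift_id] at ker_comp ker_t coker_s coker_comp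
  simp only [← lift_umax.{v, max u w}, ← lift_umax.{w, max u v}] at *
  rw [← ker_comp, coker_s, ← ker_t, coker_comp]
  ring

theorem rank_ker_comp_lt_aleph0 {C : Type*} {D : Type*} {G : Type*}
    [AddCommGroup C] [Module K C] [AddCommGroup D] [Module K D] [AddCommGroup G] [Module K G]
    {s : C →ₗ[K] D} {t : D →ₗ[K] G} (hs : Module.rank K s.ker < ℵ₀)
    (ht : Module.rank K t.ker < ℵ₀) : Module.rank K (t ∘ₗ s).ker < ℵ₀ := by
  rw [Module.rank_lt_aleph0_iff] at hs ht ⊢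
  rw [LinearMap.ker_comp]
  infer_instance

end LinearAlgebra

section HilbertDimension

variable {𝕜 : Type*} [RCLike 𝕜]
  {X : Type*} [NormedAddCommGroup X] [InnerProductSpace 𝕜 X]
  {Y : Type*} [NormedAddCommGroup Y] [InnerProductSpace 𝕜 Y]

theorem infinite_of_hilbertBasis {ι : Type*} (b : HilbertBasis ι 𝕜 X)
    (hX : ¬FiniteDimensional 𝕜 X) : Infinite ι := by
  by_contra hι
  rw [not_infinite_iff_finite] at hι
  have := Fintype.ofFinite ι
  exact hX b.toOrthonormalBasis.toBasis.finiteDimensional_of_finite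

theorem exists_inner_ne_zero_of_dense_span {ι : Type*} {v : ι → X}
    (hv : Dense (Submodule.span 𝕜 (Set.range v) : Set X)) {x : X} (hx : x ≠ 0) :
    ∃ i, inner 𝕜 x (v i) ≠ 0 := by
  by_contra! h
  have innerSL_eq_zero : innerSL 𝕜 x = 0 :=
    ContinuousLinearMap.ext_on hv (by rintro _ ⟨i, rfl⟩; exact h i)
  exact hx (inner_self_eq_zero.mp (DFunLike.congr_fun innerSL_eq_zero x))

theorem lift_mk_le_of_orthonormal_of_dense_span {ι : Type u} {κ : Type v} [Infinite ι]
    {c : κ → X} (hc : Orthonormal 𝕜 c) {v : ι → X}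
    (hv : Dense (Submodule.span 𝕜 (Set.range v) : Set X)) :
    lift.{u} (#κ) ≤ lift.{v} (#ι) := by
  let support (i : ι) : Set κ := {k | inner 𝕜 (c k) (v i) ≠ 0}
  have mk_support_le (i : ι) : #(support i) ≤ ℵ₀ := by
    refine mk_le_aleph0_iff.mpr
      ((hc.inner_products_summable (v i)).countable_support.mono fun k hk ↦ ?_)
    simpa [support] using hk
  have iUnion_support : ⋃ i, support i = Set.univ := Set.eq_univ_of_forall fun k ↦
    Set.mem_iUnion.mpr (exists_inner_ne_zero_of_dense_span hv (hc.ne_zero k))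
  calc lift.{u} (#κ) = lift.{u} (#(⋃ i, support i)) := by rw [iUnion_support, mk_univ]
    _ ≤ Cardinal.sum fun i ↦ #(support i) := mk_iUnion_le_sum_mk_lift
    _ ≤ Cardinal.sum fun _ : ι ↦ ℵ₀ := sum_le_sum _ _ mk_support_le
    _ = lift.{v} (#ι) := by simp

theorem nonempty_linearIsometry_of_denseRange [CompleteSpace X] [CompleteSpace Y]
    (hX : ¬FiniteDimensional 𝕜 X) {A : X →L[𝕜] Y} (hA : DenseRange A) :
    Nonempty (Y →ₗᵢ[𝕜] X) := by
  obtain ⟨ι, b, -⟩ := exists_hilbertBasis 𝕜 X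
  obtain ⟨κ, c, -⟩ := exists_hilbertBasis 𝕜 Y
  have := infinite_of_hilbertBasis b hX
  have dense_span_image : Dense (Submodule.span 𝕜 (Set.range (A ∘ b)) : Set Y) := by
    have := hA.dense_image A.continuous
      (Submodule.dense_iff_topologicalClosure_eq_top.mpr b.dense_span)
    rwa [Set.range_comp, ← ContinuousLinearMap.coe_coe, Submodule.span_image, Submodule.map_coe]
  obtain ⟨e⟩ := lift_mk_le'.mp
    (lift_mk_le_of_orthonormal_of_dense_span c.orthonormal dense_span_image)
  have be_orthonormal : Orthonormal 𝕜 (b ∘ e) := b.orthonormal.comp e e.injective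
  exact ⟨be_orthonormal.orthogonalFamily.linearIsometry.comp c.repr.toLinearIsometry⟩

theorem rank_range_of_denseRange [CompleteSpace X] [CompleteSpace Y] (A : X →L[𝕜] Y)
    (hA : DenseRange A) : Module.rank 𝕜 A.range = Module.rank 𝕜 Y := by
  by_cases hfin : FiniteDimensional 𝕜 A.range
  · have range_eq_top : A.range = ⊤ := by
      rw [← A.range.closed_of_finiteDimensional.submodule_topologicalClosure_eq,
        ← Submodule.dense_iff_topologicalClosure_eq_top]
      exact hA
    rw [range_eq_top, rank_top]
  have : CompleteSpace A.ker := A.isClosed_ker.completeSpace_coe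
  let B : A.kerᗮ →L[𝕜] Y := A ∘L A.kerᗮ.subtypeL
  have B_injective : Function.Injective B :=
    LinearMap.injective_domRestrict_iff.mpr A.ker.orthogonal_disjoint.symm
  have range_B : B.range = A.range :=
    (LinearMap.range_domRestrict _ _).trans
      (Submodule.map_eq_range_iff.mpr A.ker.isCompl_orthogonal.codisjoint.symm)
  have hB : DenseRange B := by
    change Dense (B.range : Set Y)
    rw [range_B]
    exact hA
  have hker : ¬FiniteDimensional 𝕜 A.kerᗮ := fun _ ↦
    hfin (range_B ▸ inferInstanceAs (FiniteDimensional 𝕜 B.toLinearMap.range))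
  obtain ⟨J⟩ := nonempty_linearIsometry_of_denseRange hker hB
  refine le_antisymm (Submodule.rank_le _) ?_
  rw [← range_B]
  exact LinearMap.rank_le_of_injective (B.toLinearMap.rangeRestrict ∘ₗ J.toLinearMap)
    (B.toLinearMap.injective_rangeRestrict_iff.mpr B_injective |>.comp J.injective)

theorem rank_range_quotient_of_denseRange [CompleteSpace X] [CompleteSpace Y] (A : X →L[𝕜] Y)
    (hA : DenseRange A) {R : Submodule 𝕜 Y} (hR : IsClosed (R : Set Y)) :
    Module.rank 𝕜 (A.range ⧸ R.comap A.range.subtype) = Module.rank 𝕜 (Y ⧸ R) := by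
  have : CompleteSpace R := hR.completeSpace_coe
  let P : Y →L[𝕜] Rᗮ := Rᗮ.orthogonalProjectionOnto
  have P_surjective : Function.Surjective P := fun y ↦ ⟨y, by simp [P]⟩
  have hPA : DenseRange (P ∘L A) := P_surjective.denseRange.comp hA P.continuous
  have ker_P : P.ker = R := by
    rw [Submodule.ker_orthogonalProjectionOnto, R.orthogonal_orthogonal]
  have hker : (P.toLinearMap ∘ₗ A.range.subtype).ker = R.comap A.range.subtype := by
    rw [LinearMap.ker_comp, ker_P]
  have hrange : (P.toLinearMap ∘ₗ A.range.subtype).range = (P ∘L A).range := by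
    rw [LinearMap.range_comp, Submodule.range_subtype, ← LinearMap.range_comp]
    rfl
  rw [← hker, (LinearMap.quotKerEquivRange _).rank_eq, hrange, rank_range_of_denseRange _ hPA,
    R.quotientEquivOrthogonal.toLinearEquiv.rank_eq]

end HilbertDimension

section ClosedImage

theorem isClosed_map_of_isClosed_range {𝕜 : Type*} [NontriviallyNormedField 𝕜]
    {W : Type*} [NormedAddCommGroup W] [NormedSpace 𝕜 W] [CompleteSpace W]
    {Z : Type*} [NormedAddCommGroup Z] [NormedSpace 𝕜 Z] [CompleteSpace Z]
    (A : W →L[𝕜] Z) (hA : IsClosed (A.range : Set Z)) {L : Submodule 𝕜 W}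
    (hL : IsClosed ((L ⊔ A.ker : Submodule 𝕜 W) : Set W)) :
    IsClosed (L.map A.toLinearMap : Set Z) := by
  have : CompleteSpace A.range := hA.completeSpace_coe
  have isQuotientMap : Topology.IsQuotientMap A.rangeRestrict :=
    A.rangeRestrict.isQuotientMap A.toLinearMap.surjective_rangeRestrict
  have isClosed_in_range : IsClosed
      ((L.map A.toLinearMap).comap A.range.subtype : Set A.range) := by
    rw [← Submodule.comap_map_eq] at hL
    exact isQuotientMap.isClosed_preimage.mp hL
  have image_val : Subtype.val '' ((L.map A.toLinearMap).comap A.range.subtype : Set A.range) =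
      (L.map A.toLinearMap : Set Z) := by
    rw [Submodule.comap_coe, Submodule.coe_subtype]
    refine Set.image_preimage_eq_of_subset ?_
    rintro _ ⟨x, -, rfl⟩
    exact ⟨A.rangeRestrict x, rfl⟩
  rw [← image_val]
  exact hA.isClosedEmbedding_subtypeVal.isClosedMap _ isClosed_in_range

end ClosedImage

section Graph

variable {𝕜 : Type*} [RCLike 𝕜]
  {X : Type*} [NormedAddCommGroup X] [InnerProductSpace 𝕜 X]
  {Y : Type*} [NormedAddCommGroup Y] [InnerProductSpace 𝕜 Y]

/-- The graph of `T` inside the Hilbert sum `X ⊕ Y`. The `L²` norm, rather than the supremum norm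
of `X × Y`, makes the graph of a closed operator a Hilbert space. -/
def hilbertGraph (T : X →ₗ.[𝕜] Y) : Submodule 𝕜 (WithLp 2 (X × Y)) :=
  T.graph.comap (WithLp.linearEquiv 2 𝕜 (X × Y)).toLinearMap

/-- The bounded projection of the graph of `T` onto the domain of `T`. -/
def graphFst (T : X →ₗ.[𝕜] Y) : hilbertGraph T →L[𝕜] X :=
  WithLp.fstL 2 𝕜 X Y ∘L (hilbertGraph T).subtypeL

/-- The bounded projection of the graph of `T` onto the range of `T`. -/
def graphSnd (T : X →ₗ.[𝕜] Y) : hilbertGraph T →L[𝕜] Y :=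
  WithLp.sndL 2 𝕜 X Y ∘L (hilbertGraph T).subtypeL

/-- The linear isomorphism `x ↦ (x, T x)`. It turns the inclusion of the domain into `graphFst T`
and `T` into `graphSnd T`. -/
def domainEquivGraph (T : X →ₗ.[𝕜] Y) : T.domain ≃ₗ[𝕜] hilbertGraph T where
  toFun x := ⟨WithLp.toLp 2 (x, T x), T.mem_graph x⟩
  map_add' x y := Subtype.ext <| WithLp.ofLp_injective 2 <| Prod.ext rfl (T.map_add x y)
  map_smul' c x := Subtype.ext <| WithLp.ofLp_injective 2 <| Prod.ext rfl (T.map_smul c x)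
  invFun p := ⟨p.1.fst, LinearPMap.mem_domain_of_mem_graph p.2⟩
  left_inv _ := rfl
  right_inv p := Subtype.ext <| WithLp.ofLp_injective 2 <| Prod.ext rfl <|
    T.mem_graph_snd_inj' (T.mem_graph _) p.2 rfl

variable {T : X →ₗ.[𝕜] Y}

theorem completeSpace_hilbertGraph [CompleteSpace X] [CompleteSpace Y] (hT : T.IsClosed) :
    CompleteSpace (hilbertGraph T) :=
  (hT.preimage (WithLp.prod_continuous_ofLp 2 X Y)).completeSpace_coe

variable (T)

theorem graphFst_comp_domainEquivGraph :
    (graphFst T).toLinearMap ∘ₗ (domainEquivGraph T).toLinearMap = T.domain.subtype :=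
  rfl

theorem graphSnd_comp_domainEquivGraph :
    (graphSnd T).toLinearMap ∘ₗ (domainEquivGraph T).toLinearMap = T.toFun :=
  rfl

theorem range_graphFst : (graphFst T).range = T.domain := by
  rw [← T.domain.range_subtype, ← graphFst_comp_domainEquivGraph, LinearEquiv.range_comp]

theorem range_graphSnd : (graphSnd T).range = T.toFun.range := by
  rw [← graphSnd_comp_domainEquivGraph, LinearEquiv.range_comp]

theorem map_comap_graph (R : Submodule 𝕜 X) :
    (R.comap (graphFst T).toLinearMap).map (graphSnd T).toLinearMap =
      (R.comap T.domain.subtype).map T.toFun := by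
  rw [← graphFst_comp_domainEquivGraph, ← graphSnd_comp_domainEquivGraph, Submodule.comap_comp,
    Submodule.map_comp, Submodule.map_comap_eq_of_surjective (domainEquivGraph T).surjective]

theorem finiteDimensional_ker_graphSnd [FiniteDimensional 𝕜 T.toFun.ker] :
    FiniteDimensional 𝕜 (graphSnd T).ker := by
  have ker_eq : T.toFun.ker.map (domainEquivGraph T).toLinearMap = (graphSnd T).ker := by
    rw [← graphSnd_comp_domainEquivGraph, LinearMap.ker_comp,
      Submodule.map_comap_eq_of_surjective (domainEquivGraph T).surjective]
  rw [← ker_eq]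
  infer_instance

theorem rank_domain_quotient [CompleteSpace X] [CompleteSpace Y] (hT : Dense (T.domain : Set X))
    (hTc : T.IsClosed) {R : Submodule 𝕜 X} (hR : IsClosed (R : Set X)) :
    Module.rank 𝕜 (T.domain ⧸ R.comap T.domain.subtype) = Module.rank 𝕜 (X ⧸ R) := by
  have := completeSpace_hilbertGraph hTc
  have hdense : DenseRange (graphFst T) := by
    change Dense ((graphFst T).range : Set X)
    rwa [range_graphFst]
  rw [← rank_range_quotient_of_denseRange (graphFst T) hdense hR, range_graphFst]

theorem isClosed_map_comap_domain [CompleteSpace X] [CompleteSpace Y] (hTc : T.IsClosed)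
    (hr : IsClosed (T.toFun.range : Set Y)) [FiniteDimensional 𝕜 T.toFun.ker]
    {R : Submodule 𝕜 X} (hR : IsClosed (R : Set X)) :
    IsClosed ((R.comap T.domain.subtype).map T.toFun : Set Y) := by
  have := completeSpace_hilbertGraph hTc
  have := finiteDimensional_ker_graphSnd T
  rw [← map_comap_graph]
  exact isClosed_map_of_isClosed_range _ (by rwa [range_graphSnd])
    (Submodule.isClosed_sup_finiteDimensional _ _ (hR.preimage (graphFst T).continuous))

end Graph

section Adjoint

variable {𝕜 : Type*} [RCLike 𝕜]
  {X : Type*} [NormedAddCommGroup X] [InnerProductSpace 𝕜 X] [CompleteSpace X]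
  {Y : Type*} [NormedAddCommGroup Y] [InnerProductSpace 𝕜 Y]
  {T : X →ₗ.[𝕜] Y}

theorem map_ker_adjoint (hT : Dense (T.domain : Set X)) :
    T.adjoint.toFun.ker.map T.adjoint.domain.subtype = T.toFun.rangeᗮ := by
  ext y
  rw [Submodule.mem_orthogonal']
  constructor
  · rintro ⟨z, hz, rfl⟩ _ ⟨x, rfl⟩
    calc inner 𝕜 (z : Y) (T x) = inner 𝕜 (T.adjoint z) (x : X) :=
          (LinearPMap.adjoint_isFormalAdjoint hT z x).symm
      _ = 0 := by rw [show T.adjoint z = 0 from hz, inner_zero_left]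
  · intro hy
    have inner_eq (x : T.domain) : inner 𝕜 (0 : X) (x : X) = inner 𝕜 y (T x) := by
      rw [inner_zero_left]
      exact (hy _ ⟨x, rfl⟩).symm
    have hmem : y ∈ T.adjoint.domain := T.mem_adjoint_domain_of_exists y ⟨0, inner_eq⟩
    exact ⟨⟨y, hmem⟩, LinearPMap.adjoint_apply_eq hT ⟨y, hmem⟩ inner_eq, rfl⟩

theorem rank_ker_adjoint [CompleteSpace Y] (hT : Dense (T.domain : Set X))
    (hr : IsClosed (T.toFun.range : Set Y)) :
    Module.rank 𝕜 T.adjoint.toFun.ker = Module.rank 𝕜 (Y ⧸ T.toFun.range) := by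
  have : CompleteSpace T.toFun.range := hr.completeSpace_coe
  rw [T.toFun.range.quotientEquivOrthogonal.toLinearEquiv.rank_eq, ← map_ker_adjoint hT]
  exact (Submodule.equivMapOfInjective _ (Submodule.injective_subtype _) _).rank_eq

end Adjoint

section Product

variable {E : Type u} {F : Type v} {G : Type w}
  [NormedAddCommGroup E] [InnerProductSpace ℂ E]
  [NormedAddCommGroup F] [InnerProductSpace ℂ F]
  [NormedAddCommGroup G] [InnerProductSpace ℂ G]
  (T₁ : E →ₗ.[ℂ] F) (T₂ : F →ₗ.[ℂ] G)

/-- The restriction of `T₁` to `dom(T₂T₁)` with values in `dom T₂`. It is the inner factor of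
`T₂T₁`, viewed as a composition of everywhere defined linear maps. -/
def pcompInner : (pcomp T₂ T₁).domain →ₗ[ℂ] T₂.domain :=
  (T₁.toFun.restrict (p := T₂.domain.comap T₁.toFun) (q := T₂.domain) fun _ hx => hx) ∘ₗ
    (Submodule.equivMapOfInjective T₁.domain.subtype (Submodule.injective_subtype _)
      (T₂.domain.comap T₁.toFun)).symm.toLinearMap

theorem toFun_pcomp : (pcomp T₂ T₁).toFun = T₂.toFun ∘ₗ pcompInner T₁ T₂ :=
  rfl

theorem domain_pcomp_le : (pcomp T₂ T₁).domain ≤ T₁.domain :=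
  Submodule.map_subtype_le _ _

theorem mem_graph_pcompInner (x : (pcomp T₂ T₁).domain) :
    ((x : E), (pcompInner T₁ T₂ x : F)) ∈ T₁.graph := by
  let e := Submodule.equivMapOfInjective T₁.domain.subtype (Submodule.injective_subtype _)
    (T₂.domain.comap T₁.toFun)
  have coe_symm : ((e.symm x : T₁.domain) : E) = x := congrArg Subtype.val (e.apply_symm_apply x)
  exact T₁.mem_graph_iff.mpr ⟨e.symm x, coe_symm, rfl⟩

variable {T₁ T₂}

theorem exists_pcompInner_eq {x : E} {y : T₂.domain} (h : (x, (y : F)) ∈ T₁.graph) :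
    ∃ x' : (pcomp T₂ T₁).domain, (x' : E) = x ∧ pcompInner T₁ T₂ x' = y := by
  obtain ⟨a, rfl, hay⟩ := T₁.mem_graph_iff.mp h
  have ha : a ∈ T₂.domain.comap T₁.toFun := show T₁ a ∈ T₂.domain from hay ▸ y.2
  exact ⟨⟨a, a, ha, rfl⟩, rfl,
    Subtype.ext (T₁.mem_graph_snd_inj (mem_graph_pcompInner T₁ T₂ _) h rfl)⟩

theorem mem_graph_pcomp {x : E} {z : G} :
    (x, z) ∈ (pcomp T₂ T₁).graph ↔ ∃ y, (x, y) ∈ T₁.graph ∧ (y, z) ∈ T₂.graph := by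
  constructor
  · intro h
    obtain ⟨x, rfl, rfl⟩ := LinearPMap.mem_graph_iff _ |>.mp h
    exact ⟨pcompInner T₁ T₂ x, mem_graph_pcompInner T₁ T₂ x, T₂.mem_graph _⟩
  · rintro ⟨y, hxy, hyz⟩
    obtain ⟨y, rfl, rfl⟩ := T₂.mem_graph_iff.mp hyz
    obtain ⟨x, rfl, rfl⟩ := exists_pcompInner_eq hxy
    exact (pcomp T₂ T₁).mem_graph x

variable (T₁ T₂)

theorem range_pcompInner :
    (pcompInner T₁ T₂).range = T₁.toFun.range.comap T₂.domain.subtype := by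
  ext y
  constructor
  · rintro ⟨x, rfl⟩
    obtain ⟨a, -, ha⟩ := T₁.mem_graph_iff.mp (mem_graph_pcompInner T₁ T₂ x)
    exact ⟨a, ha⟩
  · rintro ⟨a, ha⟩
    obtain ⟨x, -, hx⟩ := exists_pcompInner_eq (T₁.mem_graph_iff.mpr ⟨a, rfl, ha⟩)
    exact ⟨x, hx⟩

theorem rank_ker_pcompInner :
    Module.rank ℂ (pcompInner T₁ T₂).ker = Module.rank ℂ T₁.toFun.ker := by
  have map_ker : (pcompInner T₁ T₂).ker.map (pcomp T₂ T₁).domain.subtype =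
      T₁.toFun.ker.map T₁.domain.subtype := by
    ext x
    constructor
    · rintro ⟨x, hx, rfl⟩
      have hx0 := mem_graph_pcompInner T₁ T₂ x
      rw [show pcompInner T₁ T₂ x = 0 from hx] at hx0
      obtain ⟨a, ha, hax⟩ := T₁.mem_graph_iff.mp hx0
      exact ⟨a, hax, ha⟩
    · rintro ⟨a, ha, rfl⟩
      obtain ⟨x, hxa, hx⟩ := exists_pcompInner_eq (y := (0 : T₂.domain))
        (T₁.mem_graph_iff.mpr ⟨a, rfl, ha⟩)
      exact ⟨x, hx, hxa⟩
  rw [(Submodule.equivMapOfInjective _ (Submodule.injective_subtype _) _).rank_eq, map_ker,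
    ← (Submodule.equivMapOfInjective _ (Submodule.injective_subtype _) _).rank_eq]

theorem rank_ker_pcomp_lt_aleph0 (h₁ : Module.rank ℂ T₁.toFun.ker < ℵ₀)
    (h₂ : Module.rank ℂ T₂.toFun.ker < ℵ₀) : Module.rank ℂ (pcomp T₂ T₁).toFun.ker < ℵ₀ :=
  rank_ker_comp_lt_aleph0 ((rank_ker_pcompInner T₁ T₂).trans_lt h₁) h₂

variable {T₁ T₂}

theorem isClosed_range_pcomp [CompleteSpace F] [CompleteSpace G]
    (hr₁ : IsClosed (T₁.toFun.range : Set F)) (hc₂ : T₂.IsClosed)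
    (hr₂ : IsClosed (T₂.toFun.range : Set G)) [FiniteDimensional ℂ T₂.toFun.ker] :
    IsClosed ((pcomp T₂ T₁).toFun.range : Set G) := by
  rw [toFun_pcomp, LinearMap.range_comp, range_pcompInner]
  exact isClosed_map_comap_domain T₂ hc₂ hr₂ hr₁

theorem graph_pcomp : (pcomp T₂ T₁).graph =
    (T₁.graph.comap (LinearMap.id.prodMap (graphFst T₂).toLinearMap)).map
      (LinearMap.id.prodMap (graphSnd T₂).toLinearMap) := by
  ext ⟨x, z⟩
  rw [mem_graph_pcomp]
  constructor
  · rintro ⟨y, hxy, hyz⟩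
    exact ⟨(x, ⟨WithLp.toLp 2 (y, z), hyz⟩), hxy, rfl⟩
  · rintro ⟨⟨a, p⟩, hap, h⟩
    obtain ⟨rfl, rfl⟩ := Prod.mk.inj h
    exact ⟨graphFst T₂ p, hap, p.2⟩

theorem isClosed_pcomp [CompleteSpace E] [CompleteSpace F] [CompleteSpace G]
    (hc₁ : T₁.IsClosed) (hc₂ : T₂.IsClosed)
    (hr₂ : IsClosed (T₂.toFun.range : Set G)) [FiniteDimensional ℂ T₂.toFun.ker] :
    (pcomp T₂ T₁).IsClosed := by
  have := completeSpace_hilbertGraph hc₂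
  have := finiteDimensional_ker_graphSnd T₂
  let A : (E × hilbertGraph T₂) →L[ℂ] E × G := (ContinuousLinearMap.id ℂ E).prodMap (graphSnd T₂)
  let B : (E × hilbertGraph T₂) →L[ℂ] E × F := (ContinuousLinearMap.id ℂ E).prodMap (graphFst T₂)
  have range_A : A.range = Submodule.prod ⊤ T₂.toFun.range := by
    rw [← range_graphSnd, ← LinearMap.range_id, ← LinearMap.range_prodMap]
    rfl
  have ker_A : A.ker = Submodule.prod ⊥ (graphSnd T₂).ker := by
    rw [← LinearMap.ker_id, ← LinearMap.ker_prodMap]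
    rfl
  have isClosed_range_A : IsClosed (A.range : Set (E × G)) := by
    rw [range_A]
    exact isClosed_univ.prod hr₂
  have : FiniteDimensional ℂ A.ker := by
    rw [ker_A, ← Submodule.map_inr]
    infer_instance
  rw [LinearPMap.IsClosed, graph_pcomp]
  exact isClosed_map_of_isClosed_range A isClosed_range_A
    (Submodule.isClosed_sup_finiteDimensional _ _ (hc₁.preimage B.continuous))

theorem lift_rank_ker_pcomp_add [CompleteSpace E] [CompleteSpace F] [CompleteSpace G]
    (hr₁ : IsClosed (T₁.toFun.range : Set F)) (hd₂ : Dense (T₂.domain : Set F))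
    (hc₂ : T₂.IsClosed) (hr₂ : IsClosed (T₂.toFun.range : Set G))
    (hd : Dense ((pcomp T₂ T₁).domain : Set E))
    (hr : IsClosed ((pcomp T₂ T₁).toFun.range : Set G)) :
    lift.{max v w} (Module.rank ℂ (pcomp T₂ T₁).toFun.ker) +
        lift.{max u w} (Module.rank ℂ T₁.adjoint.toFun.ker) +
        lift.{max u v} (Module.rank ℂ T₂.adjoint.toFun.ker) =
      lift.{max v w} (Module.rank ℂ T₁.toFun.ker) +
        lift.{max u w} (Module.rank ℂ T₂.toFun.ker) +
        lift.{max u v} (Module.rank ℂ (pcomp T₂ T₁).adjoint.toFun.ker) := by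
  rw [rank_ker_adjoint (hd.mono (domain_pcomp_le T₁ T₂)) hr₁, rank_ker_adjoint hd₂ hr₂,
    rank_ker_adjoint hd hr, ← rank_domain_quotient T₂ hd₂ hc₂ hr₁, ← range_pcompInner,
    ← rank_ker_pcompInner T₁ T₂, toFun_pcomp]
  exact lift_rank_ker_comp_add_quotient_ranges (pcompInner T₁ T₂) T₂.toFun

end Product

theorem left_semiFredholm_product_index_general {E : Type u} {F : Type v} {G : Type w}
    [NormedAddCommGroup E] [InnerProductSpace ℂ E] [CompleteSpace E]
    [NormedAddCommGroup F] [InnerProductSpace ℂ F] [CompleteSpace F]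
    [NormedAddCommGroup G] [InnerProductSpace ℂ G] [CompleteSpace G]
    (T₁ : E →ₗ.[ℂ] F) (T₂ : F →ₗ.[ℂ] G)
    (hc₁ : T₁.IsClosed) (hr₁ : IsClosed (T₁.toFun.range : Set F))
    (h₂ : IsLeftSemiFredholmP T₂) (hdense : Dense ((pcomp T₂ T₁).domain : Set E)) :
    (pcomp T₂ T₁).IsClosed ∧ IsClosed ((pcomp T₂ T₁).toFun.range : Set G) ∧
      lift.{max v w} (Module.rank ℂ (pcomp T₂ T₁).toFun.ker) +
        lift.{max u w} (Module.rank ℂ T₁.adjoint.toFun.ker) +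
        lift.{max u v} (Module.rank ℂ T₂.adjoint.toFun.ker) =
      lift.{max v w} (Module.rank ℂ T₁.toFun.ker) +
        lift.{max u w} (Module.rank ℂ T₂.toFun.ker) +
        lift.{max u v} (Module.rank ℂ (pcomp T₂ T₁).adjoint.toFun.ker) := by
  obtain ⟨hd₂, hc₂, hr₂, hk₂⟩ := h₂
  have : FiniteDimensional ℂ T₂.toFun.ker := Module.rank_lt_aleph0_iff.mp hk₂
  have hr := isClosed_range_pcomp hr₁ hc₂ hr₂
  exact ⟨isClosed_pcomp hc₁ hc₂ hr₂, hr, lift_rank_ker_pcomp_add hr₁ hd₂ hc₂ hr₂ hdense hr⟩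

/-- The product of two left semi-Fredholm operators, if densely defined, is closed and
left semi-Fredholm, and the index formula holds in cardinal arithmetic:
`dim ker(T₂T₁) + dim ker T₁* + dim ker T₂* = dim ker T₁ + dim ker T₂ + dim ker (T₂T₁)*`. -/
theorem left_semiFredholm_product_index {E : Type u} {F : Type v} {G : Type w}
    [NormedAddCommGroup E] [InnerProductSpace ℂ E] [CompleteSpace E]
    [NormedAddCommGroup F] [InnerProductSpace ℂ F] [CompleteSpace F]
    [NormedAddCommGroup G] [InnerProductSpace ℂ G] [CompleteSpace G]
    (T₁ : E →ₗ.[ℂ] F) (T₂ : F →ₗ.[ℂ] G)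
    (h₁ : IsLeftSemiFredholmP T₁) (h₂ : IsLeftSemiFredholmP T₂)
    (hdense : Dense (((pcomp T₂ T₁).domain : Submodule ℂ E) : Set E)) :
    (pcomp T₂ T₁).IsClosed ∧ IsLeftSemiFredholmP (pcomp T₂ T₁) ∧
      Cardinal.lift.{max v w} (Module.rank ℂ (LinearMap.ker (pcomp T₂ T₁).toFun)) +
        Cardinal.lift.{max u w} (Module.rank ℂ (LinearMap.ker T₁.adjoint.toFun)) +
        Cardinal.lift.{max u v} (Module.rank ℂ (LinearMap.ker T₂.adjoint.toFun)) =
      Cardinal.lift.{max v w} (Module.rank ℂ (LinearMap.ker T₁.toFun)) +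
        Cardinal.lift.{max u w} (Module.rank ℂ (LinearMap.ker T₂.toFun)) +
        Cardinal.lift.{max u v} (Module.rank ℂ (LinearMap.ker (pcomp T₂ T₁).adjoint.toFun)) := by
  obtain ⟨hcl, hrange, hindex⟩ :=
    left_semiFredholm_product_index_general T₁ T₂ h₁.2.1 h₁.2.2.1 h₂ hdense
  exact ⟨hcl, ⟨hdense, hcl, hrange, rank_ker_pcomp_lt_aleph0 T₁ T₂ h₁.2.2.2 h₂.2.2.2⟩, hindex⟩
end
end

section
/- Let T₁ and T₂ be densely defined closed operators in a complex Hilbert space H such that 0 lies in the field of regularity of T₁ and of T₂, and assume the defect numbers def(T₁,0) = dim ker(T₁*) and def(T₂,0) = dim ker(T₂*) are finite. Then T₁T₂ and T₂T₁ are densely defined and closed, 0 lies in the field of regularity of both T₁T₂ and T₂T₁, and def(T₁T₂,0) = def(T₁,0) + def(T₂,0) = def(T₂T₁,0). -/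
open scoped InnerProductSpace
open Cardinal

noncomputable section

variable {E F G H : Type*}
  [NormedAddCommGroup E] [InnerProductSpace ℂ E] [CompleteSpace E]
  [NormedAddCommGroup F] [InnerProductSpace ℂ F] [CompleteSpace F]
  [NormedAddCommGroup G] [InnerProductSpace ℂ G] [CompleteSpace G]
  [NormedAddCommGroup H] [InnerProductSpace ℂ H] [CompleteSpace H]

/-!
When `0` lies in the field of regularity of a closed operator `T`, the range of `T` is closed, so
that `def(T, 0)` is the codimension of `ran T`. As `T₁` is injective, the codimension of
`ran (T₁T₂) = T₁ (dom T₁ ∩ ran T₂)` is that of `ran T₁` plus that of `dom T₁ ∩ ran T₂` in `dom T₁`.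
A dense subspace and a closed subspace of finite codimension span the whole space, so
`dom T₁ + ran T₂ = H` and the last codimension is that of `ran T₂` in `H`. A dense subspace also
meets a closed subspace of finite codimension densely; since `T₂` has a bounded inverse, the
density of `dom T₁ ∩ ran T₂` in `ran T₂` makes `dom (T₁T₂)` dense in `dom T₂`.
-/

section Codimension

universe u w

variable {K : Type*} [DivisionRing K] {V : Type u} [AddCommGroup V] [Module K V]

theorem lift_rank_quotient_map_of_injective {W : Type w} [AddCommGroup W] [Module K W]
    {f : V →ₗ[K] W} (hf : Function.Injective f) (N : Submodule K V) :
    lift.{u} (Module.rank K (W ⧸ N.map f)) =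
      lift.{u} (Module.rank K (W ⧸ LinearMap.range f)) + lift.{w} (Module.rank K (V ⧸ N)) := by
  let g := (N.map f).mkQ ∘ₗ f
  have hker : LinearMap.ker g = N := by
    rw [LinearMap.ker_comp, Submodule.ker_mkQ, Submodule.comap_map_eq_of_injective hf]
  have hrange : LinearMap.range g = (LinearMap.range f).map (N.map f).mkQ :=
    LinearMap.range_comp _ _
  have e₁ := Submodule.quotientQuotientEquivQuotient _ _ (LinearMap.map_le_range (f := f) (p := N))
  have e₂ := (Submodule.quotEquivOfEq _ _ hker).symm.trans g.quotKerEquivRange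
  rw [← Submodule.rank_quotient_add_rank (LinearMap.range g), lift_add, e₂.lift_rank_eq, hrange,
    e₁.rank_eq]

theorem rank_quotient_comap_subtype_of_sup_eq_top {D M : Submodule K V} (h : D ⊔ M = ⊤) :
    Module.rank K (D ⧸ M.comap D.subtype) = Module.rank K (V ⧸ M) := by
  let g := M.mkQ ∘ₗ D.subtype
  have hker : LinearMap.ker g = M.comap D.subtype := by rw [LinearMap.ker_comp, M.ker_mkQ]
  have hsurj : Function.Surjective g := by
    rw [← LinearMap.range_eq_top, LinearMap.range_comp, D.range_subtype,
      Submodule.map_mkQ_eq_top, sup_comm, h]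
  exact ((Submodule.quotEquivOfEq _ _ hker).symm.trans (g.quotKerEquivOfSurjective hsurj)).rank_eq

end Codimension

section DenseSubspace

variable {𝕜 V : Type*} [NontriviallyNormedField 𝕜] [CompleteSpace 𝕜]
  [AddCommGroup V] [TopologicalSpace V] [IsTopologicalAddGroup V] [Module 𝕜 V] [ContinuousSMul 𝕜 V]
  {D M : Submodule 𝕜 V} [FiniteDimensional 𝕜 (V ⧸ M)]

theorem sup_eq_top_of_dense_of_isClosed (hD : Dense (D : Set V)) (hM : IsClosed (M : Set V)) :
    D ⊔ M = ⊤ := by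
  have hclosed : IsClosed ((D ⊔ M : Submodule 𝕜 V) : Set V) :=
    Submodule.isClosed_mono_of_finiteDimensional_quotient hM le_sup_right
  have hdense : Dense ((D ⊔ M : Submodule 𝕜 V) : Set V) := hD.mono (le_sup_left (a := D))
  exact SetLike.coe_injective (hclosed.closure_eq.symm.trans hdense.closure_eq)

theorem subset_closure_inter_of_dense_of_isClosed (hD : Dense (D : Set V))
    (hM : IsClosed (M : Set V)) : (M : Set V) ⊆ closure (D ∩ M) := by
  have hsurj : LinearMap.range (M.mkQ ∘ₗ D.subtype) = ⊤ := by
    rw [LinearMap.range_comp, D.range_subtype, Submodule.map_mkQ_eq_top, sup_comm,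
      sup_eq_top_of_dense_of_isClosed hD hM]
  obtain ⟨s, hs⟩ := (M.mkQ ∘ₗ D.subtype).exists_rightInverse_of_surjective hsurj
  have hs_mkQ (q : V ⧸ M) : M.mkQ (s q) = q := LinearMap.congr_fun hs q
  -- `p` is a continuous projection onto `M` along a complement of `M` contained in `D`
  let p : V → V := fun x ↦ x - s (M.mkQ x)
  have hp_cont : Continuous p :=
    continuous_id.sub ((D.subtype ∘ₗ s).continuous_of_finiteDimensional.comp M.continuous_mkQ)
  have hp_mem (x : V) : p x ∈ M := by
    rw [← Submodule.Quotient.mk_eq_zero, ← M.mkQ_apply, map_sub, hs_mkQ, sub_self]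
  intro x hx
  have hpx : p x = x := by simp [p, (Submodule.Quotient.mk_eq_zero M).2 hx]
  rw [← hpx]
  exact map_mem_closure hp_cont (hD x) fun d hd ↦ ⟨D.sub_mem hd (s _).2, hp_mem d⟩

end DenseSubspace

theorem isClosed_map_snd_of_norm_fst_le {R X Y : Type*} [Ring R]
    [SeminormedAddCommGroup X] [Module R X] [CompleteSpace X]
    [SeminormedAddCommGroup Y] [Module R Y] {S : Submodule R (X × Y)}
    (hS : IsClosed (S : Set (X × Y))) {C : ℝ} (hC : ∀ p ∈ S, ‖p.1‖ ≤ C * ‖p.2‖) :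
    IsClosed (S.map (LinearMap.snd R X Y) : Set Y) := by
  refine isSeqClosed_iff_isClosed.1 fun v y hv hvy ↦ ?_
  choose p hpS hpv using hv
  have hdist (m n : ℕ) : dist (p m).1 (p n).1 ≤ C * dist (v m) (v n) := by
    rw [dist_eq_norm, dist_eq_norm, ← hpv, ← hpv]
    exact hC _ (S.sub_mem (hpS m) (hpS n))
  have hcauchy : CauchySeq fun n ↦ (p n).1 := by
    have hv := hvy.cauchySeq
    rw [cauchySeq_iff_tendsto_dist_atTop_0] at hv ⊢
    exact squeeze_zero (fun _ ↦ dist_nonneg) (fun n ↦ hdist n.1 n.2)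
      (by simpa only [mul_zero] using hv.const_mul C)
  obtain ⟨x, hx⟩ := cauchySeq_tendsto_of_complete hcauchy
  have hpv : (fun n ↦ (p n).2) = v := funext hpv
  exact ⟨(x, y), hS.mem_of_tendsto (hx.prodMk_nhds (hpv ▸ hvy)) (.of_forall hpS), rfl⟩

section Product

variable {X Y Z : Type*}
  [NormedAddCommGroup X] [InnerProductSpace ℂ X]
  [NormedAddCommGroup Y] [InnerProductSpace ℂ Y]
  [NormedAddCommGroup Z] [InnerProductSpace ℂ Z]
  {T : X →ₗ.[ℂ] Y} {A : Y →ₗ.[ℂ] Z} {B : X →ₗ.[ℂ] Y}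

theorem pcomp_apply (x : B.domain) (hx : B x ∈ A.domain) :
    pcomp A B ⟨x, x, hx, rfl⟩ = A ⟨B x, hx⟩ :=
  congrArg (A.toFun ∘ₗ B.toFun.restrict (p := A.domain.comap B.toFun) fun _ h ↦ h)
    ((Submodule.equivMapOfInjective B.domain.subtype B.domain.injective_subtype
      (A.domain.comap B.toFun)).symm_apply_apply ⟨x, hx⟩)

theorem mem_graph_pcomp_iff {x : X} {z : Z} :
    (x, z) ∈ (pcomp A B).graph ↔ ∃ y, (x, y) ∈ B.graph ∧ (y, z) ∈ A.graph := by
  constructor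
  · intro h
    obtain ⟨⟨_, x, hx, rfl⟩, rfl, rfl⟩ := (LinearPMap.mem_graph_iff _).1 h
    refine ⟨B x, B.mem_graph x, ?_⟩
    exact (LinearPMap.mem_graph_iff _).2 ⟨⟨B x, hx⟩, rfl, (pcomp_apply x hx).symm⟩
  · rintro ⟨_, hB, hA⟩
    obtain ⟨x, rfl, rfl⟩ := (LinearPMap.mem_graph_iff _).1 hB
    obtain ⟨⟨_, hx⟩, rfl, hz⟩ := (LinearPMap.mem_graph_iff _).1 hA
    exact (LinearPMap.mem_graph_iff _).2 ⟨⟨x, x, hx, rfl⟩, rfl, (pcomp_apply x hx).trans hz⟩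

theorem range_pcomp :
    LinearMap.range (pcomp A B).toFun =
      ((LinearMap.range B.toFun).comap A.domain.subtype).map A.toFun := by
  ext z
  rw [← LinearPMap.graph_map_snd_eq_range]
  constructor
  · rintro ⟨⟨x, _⟩, h, rfl⟩
    obtain ⟨_, hB, hA⟩ := mem_graph_pcomp_iff.1 h
    obtain ⟨y, rfl, rfl⟩ := (LinearPMap.mem_graph_iff _).1 hA
    obtain ⟨x, -, hx⟩ := (LinearPMap.mem_graph_iff _).1 hB
    exact ⟨y, ⟨x, hx⟩, rfl⟩
  · rintro ⟨y, ⟨x, hx⟩, rfl⟩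
    exact ⟨(x, A y),
      mem_graph_pcomp_iff.2 ⟨y, (LinearPMap.mem_graph_iff _).2 ⟨x, rfl, hx⟩, A.mem_graph y⟩, rfl⟩

theorem zeroRegular_iff_exists_norm_le_graph :
    ZeroRegular T ↔ ∃ C : ℝ, 0 < C ∧ ∀ p ∈ T.graph, ‖p.1‖ ≤ C * ‖p.2‖ := by
  constructor
  · rintro ⟨c, hc, h⟩
    refine ⟨c⁻¹, inv_pos.2 hc, fun p hp ↦ ?_⟩
    obtain ⟨x, hx₁, hx₂⟩ := (LinearPMap.mem_graph_iff _).1 hp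
    rw [← hx₁, ← hx₂, le_inv_mul_iff₀ hc]
    exact h x
  · rintro ⟨C, hC, h⟩
    exact ⟨C⁻¹, inv_pos.2 hC, fun x ↦ (inv_mul_le_iff₀ hC).2 (h _ (T.mem_graph x))⟩

theorem ZeroRegular.injective (hT : ZeroRegular T) : Function.Injective T.toFun := by
  obtain ⟨c, hc, h⟩ := hT
  refine (injective_iff_map_eq_zero T.toFun).2 fun x hx ↦ Subtype.ext (norm_le_zero_iff.1 ?_)
  have hle : c * ‖(x : X)‖ ≤ ‖T.toFun x‖ := h x
  rw [hx, norm_zero] at hle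
  exact nonpos_of_mul_nonpos_right hle hc

theorem ZeroRegular.isClosed_range [CompleteSpace X] (hT : ZeroRegular T) (hcl : T.IsClosed) :
    IsClosed (LinearMap.range T.toFun : Set Y) := by
  obtain ⟨C, -, hC⟩ := zeroRegular_iff_exists_norm_le_graph.1 hT
  rw [← LinearPMap.graph_map_snd_eq_range]
  exact isClosed_map_snd_of_norm_fst_le hcl hC

protected theorem ZeroRegular.pcomp (hA : ZeroRegular A) (hB : ZeroRegular B) :
    ZeroRegular (pcomp A B) := by
  obtain ⟨a, ha, hA⟩ := zeroRegular_iff_exists_norm_le_graph.1 hA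
  obtain ⟨b, hb, hB⟩ := zeroRegular_iff_exists_norm_le_graph.1 hB
  refine zeroRegular_iff_exists_norm_le_graph.2 ⟨b * a, mul_pos hb ha, fun ⟨x, z⟩ hxz ↦ ?_⟩
  obtain ⟨y, hxy, hyz⟩ := mem_graph_pcomp_iff.1 hxz
  calc ‖x‖ ≤ b * ‖y‖ := hB _ hxy
    _ ≤ b * (a * ‖z‖) := by gcongr; exact hA _ hyz
    _ = b * a * ‖z‖ := (mul_assoc _ _ _).symm

theorem ZeroRegular.isClosed_pcomp [CompleteSpace Y] (hA : ZeroRegular A) (hAcl : A.IsClosed)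
    (hBcl : B.IsClosed) : (pcomp A B).IsClosed := by
  obtain ⟨C, hC₀, hC⟩ := zeroRegular_iff_exists_norm_le_graph.1 hA
  let S : Submodule ℂ (Y × X × Z) :=
    B.graph.comap ((LinearMap.fst ℂ X Z ∘ₗ LinearMap.snd ℂ Y (X × Z)).prod (LinearMap.fst ℂ _ _)) ⊓
      A.graph.comap (LinearMap.id.prodMap (LinearMap.snd ℂ X Z))
  have hS : IsClosed (S : Set (Y × X × Z)) :=
    (hBcl.preimage (continuous_snd.fst.prodMk continuous_fst)).inter
      (hAcl.preimage (continuous_fst.prodMk continuous_snd.snd))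
  have hS_le : ∀ p ∈ S, ‖p.1‖ ≤ C * ‖p.2‖ := fun p hp ↦
    (hC _ hp.2).trans (mul_le_mul_of_nonneg_left (norm_snd_le p.2) hC₀.le)
  have hgraph : S.map (LinearMap.snd ℂ Y (X × Z)) = (pcomp A B).graph := by
    ext ⟨x, z⟩
    rw [mem_graph_pcomp_iff]
    exact ⟨fun ⟨⟨y, _⟩, h, hxz⟩ ↦ ⟨y, by subst hxz; exact h⟩, fun ⟨y, h⟩ ↦ ⟨(y, x, z), h, rfl⟩⟩
  rw [LinearPMap.IsClosed, ← hgraph]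
  exact isClosed_map_snd_of_norm_fst_le hS hS_le

theorem ZeroRegular.dense_domain_pcomp [CompleteSpace X] (hB : ZeroRegular B)
    (hBcl : B.IsClosed) (hBd : Dense (B.domain : Set X)) (hAd : Dense (A.domain : Set Y))
    [FiniteDimensional ℂ (Y ⧸ LinearMap.range B.toFun)] :
    Dense ((pcomp A B).domain : Set X) := by
  have ⟨c, hc, hle⟩ := hB
  refine dense_closure.1 (hBd.mono fun x hx ↦ Metric.mem_closure_iff.2 fun ε hε ↦ ?_)
  have hBx : B ⟨x, hx⟩ ∈ closure ((A.domain : Set Y) ∩ LinearMap.range B.toFun) :=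
    subset_closure_inter_of_dense_of_isClosed hAd (hB.isClosed_range hBcl) ⟨⟨x, hx⟩, rfl⟩
  obtain ⟨_, ⟨hyA, x', rfl⟩, hdist⟩ := Metric.mem_closure_iff.1 hBx (c * ε) (mul_pos hc hε)
  refine ⟨x', ⟨x', hyA, rfl⟩, lt_of_mul_lt_mul_left ?_ hc.le⟩
  calc c * dist x x' = c * ‖((⟨x, hx⟩ - x' : B.domain) : X)‖ := by rw [dist_eq_norm]; rfl
    _ ≤ ‖B (⟨x, hx⟩ - x')‖ := hle _
    _ = dist (B ⟨x, hx⟩) (B x') := by rw [B.map_sub, dist_eq_norm]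
    _ < c * ε := hdist

end Product

theorem map_subtype_ker_adjoint {𝕜 X Y : Type*} [RCLike 𝕜]
    [NormedAddCommGroup X] [InnerProductSpace 𝕜 X] [CompleteSpace X]
    [NormedAddCommGroup Y] [InnerProductSpace 𝕜 Y] {T : X →ₗ.[𝕜] Y}
    (hT : Dense (T.domain : Set X)) :
    (LinearMap.ker T.adjoint.toFun).map T.adjoint.domain.subtype =
      (LinearMap.range T.toFun)ᗮ := by
  ext y
  rw [Submodule.mem_orthogonal']
  constructor
  · rintro ⟨y, hy, rfl⟩ _ ⟨x, rfl⟩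
    have hy : T.adjoint y = 0 := hy
    have hadj := LinearPMap.adjoint_isFormalAdjoint hT y x
    rw [hy, inner_zero_left] at hadj
    exact hadj.symm
  · intro hy
    have hzero (x : T.domain) : inner 𝕜 (0 : X) x = inner 𝕜 y (T x) := by
      rw [inner_zero_left]
      exact (hy _ ⟨x, rfl⟩).symm
    have hy_dom := LinearPMap.mem_adjoint_domain_of_exists y ⟨0, hzero⟩
    exact ⟨⟨y, hy_dom⟩, LinearPMap.adjoint_apply_eq hT ⟨y, hy_dom⟩ hzero, rfl⟩

theorem defect0_eq_rank_quotient_range {T : E →ₗ.[ℂ] F} (hT : Dense (T.domain : Set E))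
    (hcl : IsClosed (LinearMap.range T.toFun : Set F)) :
    defect0 T = Module.rank ℂ (F ⧸ LinearMap.range T.toFun) := by
  have : CompleteSpace (LinearMap.range T.toFun) := hcl.completeSpace_coe
  calc defect0 T
      = Module.rank ℂ ((LinearMap.ker T.adjoint.toFun).map T.adjoint.domain.subtype) :=
        (Submodule.equivMapOfInjective _ T.adjoint.domain.injective_subtype _).rank_eq
    _ = Module.rank ℂ (LinearMap.range T.toFun)ᗮ := by rw [map_subtype_ker_adjoint hT]
    _ = Module.rank ℂ (F ⧸ LinearMap.range T.toFun) :=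
        (Submodule.quotientEquivOfIsCompl _ _
          (Submodule.isCompl_orthogonal _)).rank_eq.symm

theorem glazman_defect_product_general.{u, v, w} {E : Type u} {F : Type v} {G : Type w}
    [NormedAddCommGroup E] [InnerProductSpace ℂ E] [CompleteSpace E]
    [NormedAddCommGroup F] [InnerProductSpace ℂ F] [CompleteSpace F]
    [NormedAddCommGroup G] [InnerProductSpace ℂ G] [CompleteSpace G]
    (T₁ : F →ₗ.[ℂ] G) (T₂ : E →ₗ.[ℂ] F)
    (h₁d : Dense (T₁.domain : Set F)) (h₁c : T₁.IsClosed) (h₁r : ZeroRegular T₁)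
    (h₂d : Dense (T₂.domain : Set E)) (h₂c : T₂.IsClosed) (h₂r : ZeroRegular T₂)
    (h₂f : defect0 T₂ < ℵ₀) :
    Dense ((pcomp T₁ T₂).domain : Set E) ∧ (pcomp T₁ T₂).IsClosed ∧ ZeroRegular (pcomp T₁ T₂) ∧
    lift.{v} (defect0 (pcomp T₁ T₂)) = lift.{v} (defect0 T₁) + lift.{w} (defect0 T₂) := by
  have hdef₁ := defect0_eq_rank_quotient_range h₁d (h₁r.isClosed_range h₁c)
  have hdef₂ := defect0_eq_rank_quotient_range h₂d (h₂r.isClosed_range h₂c)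
  have : FiniteDimensional ℂ (F ⧸ LinearMap.range T₂.toFun) :=
    Module.rank_lt_aleph0_iff.1 (hdef₂ ▸ h₂f)
  have hd := h₂r.dense_domain_pcomp h₂c h₂d h₁d
  have hc := h₁r.isClosed_pcomp h₁c h₂c
  have hr := h₁r.pcomp h₂r
  have hsup := sup_eq_top_of_dense_of_isClosed h₁d (h₂r.isClosed_range h₂c)
  refine ⟨hd, hc, hr, ?_⟩
  rw [defect0_eq_rank_quotient_range hd (hr.isClosed_range hc), range_pcomp,
    lift_rank_quotient_map_of_injective h₁r.injective,
    rank_quotient_comap_subtype_of_sup_eq_top hsup, hdef₁, hdef₂]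

/-- Glazman's formula: if `T₁, T₂` are densely defined, closed, with `0` in their
field of regularity and finite defect numbers, then `T₁T₂` and `T₂T₁` are densely
defined and closed, `0` is in their field of regularity, and
`def(T₁T₂,0) = def(T₁,0) + def(T₂,0) = def(T₂T₁,0)`. -/
theorem glazman_defect_product (T₁ T₂ : H →ₗ.[ℂ] H)
    (h₁d : Dense (T₁.domain : Set H)) (h₁c : T₁.IsClosed) (h₁r : ZeroRegular T₁)
    (h₂d : Dense (T₂.domain : Set H)) (h₂c : T₂.IsClosed) (h₂r : ZeroRegular T₂)
    (h₁f : defect0 T₁ < ℵ₀) (h₂f : defect0 T₂ < ℵ₀) :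
    Dense (((pcomp T₁ T₂).domain : Submodule ℂ H) : Set H) ∧
    Dense (((pcomp T₂ T₁).domain : Submodule ℂ H) : Set H) ∧
    (pcomp T₁ T₂).IsClosed ∧ (pcomp T₂ T₁).IsClosed ∧
    ZeroRegular (pcomp T₁ T₂) ∧ ZeroRegular (pcomp T₂ T₁) ∧
    defect0 (pcomp T₁ T₂) = defect0 T₁ + defect0 T₂ ∧
    defect0 (pcomp T₂ T₁) = defect0 T₁ + defect0 T₂ := by
  have h₁₂ := glazman_defect_product_general T₁ T₂ h₁d h₁c h₁r h₂d h₂c h₂r h₂f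
  have h₂₁ := glazman_defect_product_general T₂ T₁ h₂d h₂c h₂r h₁d h₁c h₁r h₁f
  simp only [Cardinal.lift_id] at h₁₂ h₂₁
  exact ⟨h₁₂.1, h₂₁.1, h₁₂.2.1, h₂₁.2.1, h₁₂.2.2.1, h₂₁.2.2.1, h₁₂.2.2.2,
    h₂₁.2.2.2.trans (add_comm _ _)⟩
end
end
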